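/- Let n = 2m with n ≥ 4 and let Cay(D_n, S) be a normal Cayley graph over the dihedral group D_n. Let u and v be distinct vertex labels and let τ be a positive integer. Then PST occurs between u and v at time τ if and only if (u,v) ∈ (G_0 × G_0) ∪ (G_1 × G_1), u − v = ±m, and: (i) T_τ(μ̃_1) = T_τ(μ̃_2) = 1 and T_τ(μ̃_3) = T_τ(μ̃_4) = (−1)^m; (ii) T_τ(η_h(S_1)/d) = (−1)^h for all integers h with 1 ≤ h ≤ m−1. -/

import Mathlib

/-!
Since `S` is closed under conjugation, `T_τ(P)` commutes with all left and right translations of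
`D_n`. If it sends `e_u` to `e_v`, then it sends `e_1` to `e_c` with `c = v u⁻¹` invariant under
conjugation, so `c` is the unique nontrivial central element `a^m`, and `T_τ(P)` is the translation
by `a^m` (`PST.center`). In terms of labels, `v = a^m u` is the condition that `u` and `v` lie in
the same half and differ by `±m` (`lab_eq_iff`).

It remains to decide when `T_τ(P)` is that translation. For each frequency `h ∈ ℤ/n` and each sign
`ε = ±1`, the vector with entries `ω^{hk}` on rotations and `ε ω^{hk}` on reflections is an
eigenvector of `P` with eigenvalue `(α_h + ε β_h) / d`, where `α_h`, `β_h` are the character sums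
of the rotations and reflections in `S` (`disc_fvec`); it is also an eigenvector of the translation,
with eigenvalue `ω^{hm} = (-1)^h`. These vectors span, by Fourier inversion, so the condition is
`T_τ((α_h ± β_h) / d) = (-1)^h` for all `h` (`forall_PST_iff`). For `h = 0` and `h = m` these are
the four conditions on the one-dimensional characters; for the other `h`, `β_h = 0`
(`refSum_eq_zero`) and `α_h = η_h(S_1)`, and the symmetry `α_{-h} = α_h` leaves `1 ≤ h ≤ m - 1`.
-/

open Polynomial Matrix

noncomputable section

namespace PaperPST

/-! ### Grover-walk PST data for Cayley graphs over a general finite group -/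

/-- The adjacency matrix of the Cayley graph `Cay(Γ, S)`: `A u v = 1` iff `u * v⁻¹ ∈ S`. -/
def adjG (Γ : Type*) [Group Γ] [Fintype Γ] [DecidableEq Γ] (S : Finset Γ) : Matrix Γ Γ ℂ :=
  Matrix.of fun u v => if u * v⁻¹ ∈ S then 1 else 0

/-- The discriminant matrix `P = (1/|S|) A` of `Cay(Γ, S)`. -/
def discG (Γ : Type*) [Group Γ] [Fintype Γ] [DecidableEq Γ] (S : Finset Γ) : Matrix Γ Γ ℂ :=
  (S.card : ℂ)⁻¹ • adjG Γ S

/-- `T_τ(P)`, the `τ`-th Chebyshev polynomial of the first kind evaluated at the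
discriminant matrix of `Cay(Γ, S)`. -/
def chebG (Γ : Type*) [Group Γ] [Fintype Γ] [DecidableEq Γ] (S : Finset Γ) (τ : ℕ) :
    Matrix Γ Γ ℂ :=
  Polynomial.aeval (discG Γ S) (Polynomial.Chebyshev.T ℂ τ)

/-- Perfect state transfer between vertices `u` and `v` of `Cay(Γ, S)` at time `τ`:
`T_τ(P) e_u = e_v`. -/
def PSTG (Γ : Type*) [Group Γ] [Fintype Γ] [DecidableEq Γ] (S : Finset Γ) (τ : ℕ)
    (u v : Γ) : Prop :=
  chebG Γ S τ *ᵥ Pi.single u 1 = Pi.single v 1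

/-- Evaluation of the `τ`-th Chebyshev polynomial of the first kind at a complex number. -/
def Teval (τ : ℕ) (x : ℂ) : ℂ := (Polynomial.Chebyshev.T ℂ τ).eval x

/-! ### Specialization to the dihedral group `D_n` -/

/-- Test whether an element of the dihedral group is a rotation `a^k`. -/
def isRot {n : ℕ} : DihedralGroup n → Bool
  | .r _ => true
  | .sr _ => false

/-- The adjacency matrix of the Cayley graph `Cay(D_n, S)`. -/
def adjC (n : ℕ) (S : Finset (DihedralGroup n)) :
    Matrix (DihedralGroup n) (DihedralGroup n) ℂ :=
  Matrix.of fun u v => if u * v⁻¹ ∈ S then 1 else 0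

/-- The discriminant matrix `P = (1/|S|) A` of `Cay(D_n, S)`. -/
def disc (n : ℕ) (S : Finset (DihedralGroup n)) :
    Matrix (DihedralGroup n) (DihedralGroup n) ℂ :=
  (S.card : ℂ)⁻¹ • adjC n S

/-- `T_τ(P)`, the `τ`-th Chebyshev polynomial of the first kind evaluated at the
discriminant matrix. -/
def chebP (n : ℕ) [NeZero n] (S : Finset (DihedralGroup n)) (τ : ℕ) :
    Matrix (DihedralGroup n) (DihedralGroup n) ℂ :=
  Polynomial.aeval (disc n S) (Polynomial.Chebyshev.T ℂ τ)

/-- Perfect state transfer between vertices `u` and `v` of `Cay(D_n, S)` at time `τ`: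
`T_τ(P) e_u = e_v`. -/
def PST (n : ℕ) [NeZero n] (S : Finset (DihedralGroup n)) (τ : ℕ)
    (u v : DihedralGroup n) : Prop :=
  chebP n S τ *ᵥ Pi.single u 1 = Pi.single v 1

/-- `ω = e^{2πi/n}`. -/
def omega (n : ℕ) : ℂ := Complex.exp (2 * Real.pi * Complex.I / n)

/-- `η_h(C) = Σ_{0 ≤ k ≤ n-1, a^k ∈ C} ω^{hk}`. -/
def eta (n : ℕ) (h : ℕ) (C : Finset (DihedralGroup n)) : ℂ :=
  ∑ k ∈ Finset.range n, if DihedralGroup.r (k : ZMod n) ∈ C then omega n ^ (h * k) else 0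

/-- `S_1 = S ∩ ⟨a⟩`. -/
def S1 (n : ℕ) (S : Finset (DihedralGroup n)) : Finset (DihedralGroup n) :=
  S.filter fun x => isRot x

/-- `S_2 = bS ∩ ⟨a⟩`, i.e. `{a^k : b a^k ∈ S}`. -/
def S2 (n : ℕ) (S : Finset (DihedralGroup n)) : Finset (DihedralGroup n) :=
  (S.image fun s => DihedralGroup.sr 0 * s).filter fun x => isRot x

/-- `S_2⁻¹ = {s⁻¹ : s ∈ S_2}`. -/
def S2inv (n : ℕ) (S : Finset (DihedralGroup n)) : Finset (DihedralGroup n) :=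
  (S2 n S).image fun x => x⁻¹

/-- The number of `a^k ∈ C` with `0 ≤ k ≤ n-1` and `k % 2 = p`. -/
def dcnt (n : ℕ) (C : Finset (DihedralGroup n)) (p : ℕ) : ℕ :=
  ((Finset.range n).filter fun k => k % 2 = p ∧ DihedralGroup.r (k : ZMod n) ∈ C).card

/-- Vertex labels `0, …, 2n-1`: label `u < n` is `a^u`, and label `n ≤ u < 2n` is `b a^{u-n}`. -/
def lab (n : ℕ) (u : ℕ) : DihedralGroup n :=
  if u < n then DihedralGroup.r (u : ZMod n) else DihedralGroup.sr ((u - n : ℕ) : ZMod n)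

/-- `Cay(D_n, S)` is a normal Cayley graph if `S` is closed under conjugation. -/
def IsNormalCay (n : ℕ) (S : Finset (DihedralGroup n)) : Prop :=
  ∀ g : DihedralGroup n, ∀ s ∈ S, g * s * g⁻¹ ∈ S

/-- `Cay(D_n, S)` exhibits PST at the minimum time `τ`. -/
def exhibitsMinPST (n : ℕ) [NeZero n] (S : Finset (DihedralGroup n)) (τ : ℕ) : Prop :=
  (∃ u v : DihedralGroup n, u ≠ v ∧ PST n S τ u v) ∧
  ∀ σ : ℕ, 1 ≤ σ → σ < τ → ∀ u v : DihedralGroup n, u ≠ v → ¬ PST n S σ u v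

/-! ### Eigenvector candidates -/

/-- The all-ones vector. -/
def w1 (n : ℕ) : DihedralGroup n → ℂ := fun _ => 1

/-- The vector which is `1` on `G_0` and `-1` on `G_1`. -/
def w2 (n : ℕ) : DihedralGroup n → ℂ
  | .r _ => 1
  | .sr _ => -1

/-- The vector with entry `(-1)^k` at `a^k` and `(-1)^k` at `b a^k`. -/
def w3 (n : ℕ) : DihedralGroup n → ℂ
  | .r k => (-1) ^ k.val
  | .sr k => (-1) ^ k.val

/-- The vector with entry `(-1)^k` at `a^k` and `(-1)^{k+1}` at `b a^k`. -/
def w4 (n : ℕ) : DihedralGroup n → ℂ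
  | .r k => (-1) ^ k.val
  | .sr k => (-1) ^ (k.val + 1)

/-- The vector with entry `ω^{hk}` at `a^k` and `0` at `b a^k`. -/
def uv1 (n h : ℕ) : DihedralGroup n → ℂ
  | .r k => omega n ^ (h * k.val)
  | .sr _ => 0

/-- The vector with entry `0` at `a^k` and `ω^{hk}` at `b a^k`. -/
def uv2 (n h : ℕ) : DihedralGroup n → ℂ
  | .r _ => 0
  | .sr k => omega n ^ (h * k.val)

/-- The vector with entry `0` at `a^k` and `ω^{-hk}` at `b a^k`. -/
def uv3 (n h : ℕ) : DihedralGroup n → ℂ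
  | .r _ => 0
  | .sr k => (omega n)⁻¹ ^ (h * k.val)

/-- The vector with entry `ω^{-hk}` at `a^k` and `0` at `b a^k`. -/
def uv4 (n h : ℕ) : DihedralGroup n → ℂ
  | .r k => (omega n)⁻¹ ^ (h * k.val)
  | .sr _ => 0

/-- The vector with entry `conj(ℓ)·ω^{hk}` at `a^k` and `ω^{hk}` at `b a^k`. -/
def vv1 (n h : ℕ) (ℓ : ℂ) : DihedralGroup n → ℂ
  | .r k => (starRingEnd ℂ) ℓ * omega n ^ (h * k.val)
  | .sr k => omega n ^ (h * k.val)

/-- The vector with entry `ω^{-hk}` at `a^k` and `conj(ℓ)·ω^{-hk}` at `b a^k`. -/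
def vv2 (n h : ℕ) (ℓ : ℂ) : DihedralGroup n → ℂ
  | .r k => (omega n)⁻¹ ^ (h * k.val)
  | .sr k => (starRingEnd ℂ) ℓ * (omega n)⁻¹ ^ (h * k.val)

/-- The vector with entry `-ω^{hk}` at `a^k` and `ℓ·ω^{hk}` at `b a^k`. -/
def vv3 (n h : ℕ) (ℓ : ℂ) : DihedralGroup n → ℂ
  | .r k => -(omega n ^ (h * k.val))
  | .sr k => ℓ * omega n ^ (h * k.val)

/-- The vector with entry `ℓ·ω^{-hk}` at `a^k` and `-ω^{-hk}` at `b a^k`. -/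
def vv4 (n h : ℕ) (ℓ : ℂ) : DihedralGroup n → ℂ
  | .r k => ℓ * (omega n)⁻¹ ^ (h * k.val)
  | .sr k => -((omega n)⁻¹ ^ (h * k.val))

open DihedralGroup

/-! ### Sums and matrix polynomials -/

lemma sum_dihedral {n : ℕ} [NeZero n] (f : DihedralGroup n → ℂ) :
    ∑ x, f x = ∑ k, f (r k) + ∑ k, f (sr k) := by
  rw [← equivSum.symm.sum_comp, Fintype.sum_sum_type]
  rfl

lemma sum_range_zmod {n : ℕ} [NeZero n] {M : Type*} [AddCommMonoid M] (f : ZMod n → M) :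
    ∑ k ∈ Finset.range n, f (k : ZMod n) = ∑ k, f k := by
  refine Finset.sum_bij' (fun k _ => (k : ZMod n)) (fun k _ => k.val) ?_ ?_ ?_ ?_ ?_
  · simp
  · intro k _
    simpa using ZMod.val_lt k
  · intro k hk
    exact ZMod.val_cast_of_lt (by simpa using hk)
  · simp
  · simp

lemma aeval_mulVec_eigen {ι : Type*} [Fintype ι] [DecidableEq ι] (P : Matrix ι ι ℂ) (f : ι → ℂ)
    (μ : ℂ) (h : P *ᵥ f = μ • f) (p : ℂ[X]) : aeval P p *ᵥ f = p.eval μ • f := by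
  induction p using Polynomial.induction_on' with
  | add p q hp hq => rw [map_add, Matrix.add_mulVec, hp, hq, eval_add, add_smul]
  | monomial k a =>
    have hk : P ^ k *ᵥ f = μ ^ k • f := by
      induction k with
      | zero => simp
      | succ k ih =>
        rw [pow_succ, ← Matrix.mulVec_mulVec, h, Matrix.mulVec_smul, ih, smul_smul, pow_succ']
    rw [aeval_monomial, ← Algebra.smul_def, Matrix.smul_mulVec, hk, eval_monomial, smul_smul]

/-! ### Translation invariance and the target vertex -/

/-- As `S` is closed under conjugation, `P` commutes with left and right translations, hence so
does every polynomial in `P`. -/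
lemma chebP_translate {n : ℕ} [NeZero n] (S : Finset (DihedralGroup n))
    (hnormal : IsNormalCay n S) (τ : ℕ) (g h x y : DihedralGroup n) :
    chebP n S τ (g * x * h) (g * y * h) = chebP n S τ x y := by
  let e : DihedralGroup n ≃ DihedralGroup n := (Equiv.mulLeft g).trans (Equiv.mulRight h)
  have hconj : ∀ s, g * s * g⁻¹ ∈ S ↔ s ∈ S := fun s =>
    ⟨fun hs => by simpa [mul_assoc] using hnormal g⁻¹ _ hs, hnormal g s⟩
  have hP : Matrix.reindexAlgEquiv ℂ ℂ e.symm (disc n S) = disc n S := by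
    ext a b
    have : g * a * h * (g * b * h)⁻¹ ∈ S ↔ a * b⁻¹ ∈ S := by
      rw [← hconj (a * b⁻¹)]
      congr! 1
      group
    change (S.card : ℂ)⁻¹ * (if g * a * h * (g * b * h)⁻¹ ∈ S then 1 else 0) =
      (S.card : ℂ)⁻¹ * (if a * b⁻¹ ∈ S then 1 else 0)
    simp only [this]
  have := Polynomial.aeval_algHom_apply (Matrix.reindexAlgEquiv ℂ ℂ e.symm) (disc n S)
    (Polynomial.Chebyshev.T ℂ τ)
  rw [hP] at this
  exact (congrFun (congrFun this x) y).symm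

lemma PST_iff {n : ℕ} [NeZero n] (S : Finset (DihedralGroup n)) (τ : ℕ) (u v : DihedralGroup n) :
    PST n S τ u v ↔ ∀ x, chebP n S τ x u = if x = v then 1 else 0 := by
  unfold PST
  rw [funext_iff]
  simp [Pi.single_apply]

lemma PST.translate {n : ℕ} [NeZero n] {S : Finset (DihedralGroup n)}
    (hnormal : IsNormalCay n S) {τ : ℕ} {u v : DihedralGroup n} (H : PST n S τ u v)
    (g h : DihedralGroup n) : PST n S τ (g * u * h) (g * v * h) := by
  rw [PST_iff] at H ⊢
  intro x
  have := chebP_translate S hnormal τ g h (g⁻¹ * x * h⁻¹) u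
  rw [H] at this
  have e : g * (g⁻¹ * x * h⁻¹) * h = x := by group
  rw [e] at this
  rw [this]
  have : g⁻¹ * x * h⁻¹ = v ↔ x = g * v * h := by
    rw [mul_inv_eq_iff_eq_mul, inv_mul_eq_iff_eq_mul, mul_assoc]
  simp [this]

lemma PST.unique {n : ℕ} [NeZero n] {S : Finset (DihedralGroup n)}
    {τ : ℕ} {u v w : DihedralGroup n} (H : PST n S τ u v) (H' : PST n S τ u w) : v = w := by
  rw [PST_iff] at H H'
  have := H v
  rw [H' v] at this
  by_contra hne
  simp [hne] at this

lemma zmod_two_mul_eq_zero {n m : ℕ} [NeZero n] (hnm : n = 2 * m) (i : ZMod n)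
    (h : 2 * i = 0) : i = 0 ∨ i = m := by
  have hi := ZMod.val_lt i
  have h2 : ((2 * i.val : ℕ) : ZMod n) = 0 := by push_cast; simpa using h
  rw [ZMod.natCast_eq_zero_iff] at h2
  obtain ⟨c, hc⟩ := h2
  rw [← ZMod.natCast_zmod_val i]
  have : c < 2 := by
    by_contra hc2
    have : n * 2 ≤ n * c := Nat.mul_le_mul_left n (by omega)
    omega
  interval_cases c
  · left
    have : i.val = 0 := by omega
    simp [this]
  · right
    congr 1
    omega

lemma two_mul_m {n m : ℕ} (hnm : n = 2 * m) : (2 : ZMod n) * (m : ZMod n) = 0 := by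
  have : ((2 * m : ℕ) : ZMod n) = 0 := by rw [← hnm]; simp
  simpa using this

/-- For even `n ≥ 4` the only nontrivial central element of `D_n` is `a^m`. -/
lemma central_eq {n m : ℕ} [NeZero n] (hnm : n = 2 * m) (hn4 : 4 ≤ n) (c : DihedralGroup n)
    (hc : ∀ g, g * c * g⁻¹ = c) (hc1 : c ≠ 1) : c = r (m : ZMod n) := by
  rcases c with i | i
  · have h := hc (sr 0)
    simp only [sr_mul_r, inv_sr, sr_mul_sr, r.injEq] at h
    have h2 : 2 * i = 0 := by linear_combination -h
    rcases zmod_two_mul_eq_zero hnm i h2 with h | h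
    · subst h
      exact absurd rfl hc1
    · rw [h]
  · have h := hc (r 1)
    simp only [r_mul_sr, inv_r, sr_mul_r, sr.injEq] at h
    have h2 : ((2 : ℕ) : ZMod n) = 0 := by push_cast; linear_combination -h
    rw [ZMod.natCast_eq_zero_iff] at h2
    have := Nat.le_of_dvd (by norm_num) h2
    omega

/-- Conjugation invariance forces `v u⁻¹` to be central, so it is `a^m`; translating, every vertex
`w` is then transferred to `a^m w`. -/
lemma PST.center {n m : ℕ} [NeZero n] (hnm : n = 2 * m) (hn4 : 4 ≤ n)
    {S : Finset (DihedralGroup n)} (hnormal : IsNormalCay n S) {τ : ℕ} {u v : DihedralGroup n}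
    (huv : u ≠ v) (H : PST n S τ u v) :
    v = r (m : ZMod n) * u ∧ ∀ w, PST n S τ w (r (m : ZMod n) * w) := by
  have H1 : PST n S τ 1 (v * u⁻¹) := by simpa using H.translate hnormal 1 u⁻¹
  have hc : v * u⁻¹ = r (m : ZMod n) := by
    refine central_eq hnm hn4 _ (fun g => ?_) (fun h => huv (mul_inv_eq_one.mp h).symm)
    have := H1.translate hnormal g g⁻¹
    simp only [mul_one, mul_inv_cancel] at this
    exact this.unique H1
  refine ⟨by rw [← hc]; group, fun w => ?_⟩
  rw [hc] at H1
  simpa using H1.translate hnormal 1 w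

/-! ### Eigenvectors of the discriminant -/

/-- The character sum `∑ ω^{hk}` over the rotations `a^k ∈ S`. The frequency `h` is taken in
`ZMod n`, so that `h ↦ -h` makes sense. -/
def rotSum {n : ℕ} [NeZero n] (S : Finset (DihedralGroup n)) (h : ZMod n) : ℂ :=
  ∑ k : ZMod n, if r k ∈ S then ZMod.stdAddChar (h * k) else 0

/-- The character sum `∑ ω^{hk}` over the reflections `b a^k ∈ S`. -/
def refSum {n : ℕ} [NeZero n] (S : Finset (DihedralGroup n)) (h : ZMod n) : ℂ :=
  ∑ k : ZMod n, if sr k ∈ S then ZMod.stdAddChar (h * k) else 0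

/-- The vector with entry `ω^{hk}` at `a^k` and `ε ω^{hk}` at `b a^k`; used with `ε = ±1`. -/
def fvec {n : ℕ} [NeZero n] (h : ZMod n) (ε : ℂ) : DihedralGroup n → ℂ
  | .r k => ZMod.stdAddChar (h * k)
  | .sr k => ε * ZMod.stdAddChar (h * k)

lemma r_neg_mem {n : ℕ} {S : Finset (DihedralGroup n)} (hnormal : IsNormalCay n S) (k : ZMod n) :
    r (-k) ∈ S ↔ r k ∈ S := by
  constructor <;> intro h <;> simpa using hnormal (sr 0) _ h

lemma sr_neg_mem {n : ℕ} {S : Finset (DihedralGroup n)} (hnormal : IsNormalCay n S) (k : ZMod n) :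
    sr (-k) ∈ S ↔ sr k ∈ S := by
  constructor <;> intro h <;> simpa using hnormal (sr 0) _ h

lemma sr_add_two_mem {n : ℕ} {S : Finset (DihedralGroup n)} (hnormal : IsNormalCay n S)
    (k : ZMod n) : sr (k + 2) ∈ S ↔ sr k ∈ S := by
  constructor <;> intro h
  · have := hnormal (r 1) _ h
    simp only [r_mul_sr, inv_r, sr_mul_r] at this
    convert this using 2
    ring
  · have := hnormal (r (-1)) _ h
    simp only [r_mul_sr, inv_r, sr_mul_r] at this
    convert this using 2
    ring

/-- `fvec h ε` is an eigenvector of `P` for `ε = ±1`, for every frequency `h`. -/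
lemma disc_fvec {n : ℕ} [NeZero n] {S : Finset (DihedralGroup n)} (hnormal : IsNormalCay n S)
    (h : ZMod n) (ε : ℂ) (hε : ε * ε = 1) :
    disc n S *ᵥ fvec h ε = ((rotSum S h + ε * refSum S h) / (S.card : ℂ)) • fvec h ε := by
  have key : ∀ (p : ZMod n → Prop) [DecidablePred p] (i : ZMod n),
      ∑ j, (if p (j - i) then ZMod.stdAddChar (h * j) else (0 : ℂ)) =
        (∑ k, if p k then ZMod.stdAddChar (h * k) else (0 : ℂ)) * ZMod.stdAddChar (h * i) := by
    intro p _ i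
    rw [← Equiv.sum_comp (Equiv.addRight i), Finset.sum_mul]
    refine Finset.sum_congr rfl fun k _ => ?_
    simp [mul_add, AddChar.map_add_eq_mul]
  have hr : ∀ i j : ZMod n, r (i - j) ∈ S ↔ r (j - i) ∈ S := fun i j => by
    rw [← r_neg_mem hnormal, neg_sub]
  have hs : ∀ i j : ZMod n, sr (i - j) ∈ S ↔ sr (j - i) ∈ S := fun i j => by
    rw [← sr_neg_mem hnormal, neg_sub]
  have k1 : ∀ i, ∑ j, (if r (j - i) ∈ S then ZMod.stdAddChar (h * j) else (0 : ℂ)) =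
      rotSum S h * ZMod.stdAddChar (h * i) := key (fun k => r k ∈ S)
  have k2 : ∀ i, ∑ j, (if sr (j - i) ∈ S then ZMod.stdAddChar (h * j) else (0 : ℂ)) =
      refSum S h * ZMod.stdAddChar (h * i) := key (fun k => sr k ∈ S)
  have hA : adjC n S *ᵥ fvec h ε = (rotSum S h + ε * refSum S h) • fvec h ε := by
    ext x
    simp only [Matrix.mulVec, dotProduct, sum_dihedral, Pi.smul_apply, smul_eq_mul]
    rcases x with i | i
    · have a1 : ∀ j, adjC n S (r i) (r j) * fvec h ε (r j) =
          if r (j - i) ∈ S then ZMod.stdAddChar (h * j) else (0 : ℂ) := fun j => by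
        refine Eq.trans ?_ (if_congr (hr i j) rfl rfl)
        rw [sub_eq_add_neg]
        exact (ite_mul _ _ _ _).trans (by rw [one_mul, zero_mul]; rfl)
      have a2 : ∀ j, adjC n S (r i) (sr j) * fvec h ε (sr j) =
          ε * if sr (j - i) ∈ S then ZMod.stdAddChar (h * j) else (0 : ℂ) := fun j => by
        rw [mul_ite, mul_zero]
        exact (ite_mul _ _ _ _).trans (by rw [one_mul, zero_mul]; rfl)
      simp only [a1, a2, ← Finset.mul_sum, k1, k2]
      simp only [fvec]
      ring
    · have a1 : ∀ j, adjC n S (sr i) (r j) * fvec h ε (r j) =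
          if sr (j - i) ∈ S then ZMod.stdAddChar (h * j) else (0 : ℂ) := fun j => by
        refine Eq.trans ?_ (if_congr (hs i j) rfl rfl)
        rw [sub_eq_add_neg]
        exact (ite_mul _ _ _ _).trans (by rw [one_mul, zero_mul]; rfl)
      have a2 : ∀ j, adjC n S (sr i) (sr j) * fvec h ε (sr j) =
          ε * if r (j - i) ∈ S then ZMod.stdAddChar (h * j) else (0 : ℂ) := fun j => by
        rw [mul_ite, mul_zero]
        exact (ite_mul _ _ _ _).trans (by rw [one_mul, zero_mul]; rfl)
      simp only [a1, a2, ← Finset.mul_sum, k1, k2]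
      simp only [fvec]
      linear_combination (- refSum S h * ZMod.stdAddChar (h * i)) * hε
  rw [disc, Matrix.smul_mulVec, hA, smul_smul, div_eq_inv_mul]

lemma chebP_fvec {n : ℕ} [NeZero n] {S : Finset (DihedralGroup n)} (hnormal : IsNormalCay n S)
    (τ : ℕ) (h : ZMod n) (ε : ℂ) (hε : ε * ε = 1) :
    chebP n S τ *ᵥ fvec h ε =
      Teval τ ((rotSum S h + ε * refSum S h) / (S.card : ℂ)) • fvec h ε :=
  aeval_mulVec_eigen _ _ _ (disc_fvec hnormal h ε hε) _

lemma fourier_delta {n : ℕ} [NeZero n] (j k : ZMod n) :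
    ∑ h : ZMod n, ZMod.stdAddChar (-(h * j)) * ZMod.stdAddChar (h * k) =
      if k = j then (n : ℂ) else 0 := by
  have := AddChar.sum_mulShift (k - j) (ZMod.isPrimitive_stdAddChar n)
  simp only [sub_eq_zero, ZMod.card] at this
  rw [Nat.cast_ite, Nat.cast_zero] at this
  rw [← this]
  refine Finset.sum_congr rfl fun h _ => ?_
  rw [← AddChar.map_add_eq_mul]
  congr 1
  ring

/-- Fourier inversion on the rotation vertices. -/
lemma single_r {n : ℕ} [NeZero n] (j : ZMod n) :
    (Pi.single (r j) 1 : DihedralGroup n → ℂ) = ∑ h : ZMod n,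
      (ZMod.stdAddChar (-(h * j)) / (2 * n) : ℂ) • (fvec h 1 + fvec h (-1)) := by
  have hn : (n : ℂ) ≠ 0 := NeZero.ne _
  ext x
  simp only [Finset.sum_apply, Pi.smul_apply, Pi.add_apply, smul_eq_mul]
  rcases x with k | k
  · have : ∀ h : ZMod n, (ZMod.stdAddChar (-(h * j)) / (2 * n) : ℂ) *
        (fvec h 1 (r k) + fvec h (-1) (r k)) =
        (n : ℂ)⁻¹ * (ZMod.stdAddChar (-(h * j)) * ZMod.stdAddChar (h * k)) := fun h => by
      simp only [fvec]
      field_simp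
      ring
    simp only [this, ← Finset.mul_sum, fourier_delta]
    simp [Pi.single_apply, hn]
  · simp [fvec]

/-- Fourier inversion on the reflection vertices. -/
lemma single_sr {n : ℕ} [NeZero n] (j : ZMod n) :
    (Pi.single (sr j) 1 : DihedralGroup n → ℂ) = ∑ h : ZMod n,
      (ZMod.stdAddChar (-(h * j)) / (2 * n) : ℂ) • (fvec h 1 - fvec h (-1)) := by
  have hn : (n : ℂ) ≠ 0 := NeZero.ne _
  ext x
  simp only [Finset.sum_apply, Pi.smul_apply, Pi.sub_apply, smul_eq_mul]
  rcases x with k | k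
  · simp [fvec]
  · have : ∀ h : ZMod n, (ZMod.stdAddChar (-(h * j)) / (2 * n) : ℂ) *
        (fvec h 1 (sr k) - fvec h (-1) (sr k)) =
        (n : ℂ)⁻¹ * (ZMod.stdAddChar (-(h * j)) * ZMod.stdAddChar (h * k)) := fun h => by
      simp only [fvec]
      field_simp
      ring
    simp only [this, ← Finset.mul_sum, fourier_delta]
    simp [Pi.single_apply, hn]

/-- `T_τ(P)` is the translation by `a^m` exactly when the two operators have the same eigenvalues
on the spanning family `fvec h (±1)`. -/
lemma forall_PST_iff {n m : ℕ} [NeZero n] (hnm : n = 2 * m) {S : Finset (DihedralGroup n)}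
    (hnormal : IsNormalCay n S) (τ : ℕ) :
    (∀ w, PST n S τ w (r (m : ZMod n) * w)) ↔ ∀ h : ZMod n,
      Teval τ ((rotSum S h + refSum S h) / (S.card : ℂ)) = ZMod.stdAddChar (h * (m : ZMod n)) ∧
      Teval τ ((rotSum S h - refSum S h) / (S.card : ℂ)) = ZMod.stdAddChar (h * (m : ZMod n)) := by
  have h2m := two_mul_m hnm
  have e1 : ∀ h : ZMod n, chebP n S τ *ᵥ fvec h 1 =
      Teval τ ((rotSum S h + refSum S h) / (S.card : ℂ)) • fvec h 1 := fun h => by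
    simpa using chebP_fvec hnormal τ h 1 (by norm_num)
  have e2 : ∀ h : ZMod n, chebP n S τ *ᵥ fvec h (-1) =
      Teval τ ((rotSum S h - refSum S h) / (S.card : ℂ)) • fvec h (-1) := fun h => by
    simpa [← sub_eq_add_neg] using chebP_fvec hnormal τ h (-1) (by norm_num)
  constructor
  · intro H h
    -- The row of `T_τ(P)` at the identity is supported at `r m`, because `r m` is an involution.
    have hrow : ∀ f : DihedralGroup n → ℂ, (chebP n S τ *ᵥ f) 1 = f (r (m : ZMod n)) := by
      intro f
      have hent : ∀ w, chebP n S τ 1 w = if w = r (m : ZMod n) then 1 else 0 := fun w => by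
        rw [(PST_iff _ _ _ _).1 (H w) 1]
        have : (1 = r (m : ZMod n) * w) ↔ w = r (m : ZMod n) := by
          rw [eq_comm, mul_eq_one_iff_inv_eq, inv_r, eq_comm]
          have : -(m : ZMod n) = m := by linear_combination -h2m
          rw [this]
        simp [this]
      simp [Matrix.mulVec, dotProduct, hent]
    have a1 := hrow (fvec h 1)
    have a2 := hrow (fvec h (-1))
    rw [e1] at a1
    rw [e2] at a2
    simp only [Pi.smul_apply, one_def, fvec, smul_eq_mul, mul_zero, AddChar.map_zero_eq_one,
      mul_one] at a1 a2
    exact ⟨a1, a2⟩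
  · intro H w
    unfold PST
    rcases w with j | j
    · rw [r_mul_r, single_r, single_r, Matrix.mulVec_sum]
      refine Finset.sum_congr rfl fun h _ => ?_
      rw [Matrix.mulVec_smul, Matrix.mulVec_add, e1, e2, (H h).1, (H h).2, ← smul_add, smul_smul]
      congr 1
      rw [div_mul_eq_mul_div, ← AddChar.map_add_eq_mul]
      congr 2
      linear_combination h * h2m
    · rw [r_mul_sr, single_sr, single_sr, Matrix.mulVec_sum]
      refine Finset.sum_congr rfl fun h _ => ?_
      rw [Matrix.mulVec_smul, Matrix.mulVec_sub, e1, e2, (H h).1, (H h).2, ← smul_sub, smul_smul]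
      congr 1
      rw [div_mul_eq_mul_div, ← AddChar.map_add_eq_mul]
      congr 2
      ring

/-! ### Evaluation of the character sums -/

lemma stdAddChar_natCast {n : ℕ} [NeZero n] (k : ℕ) :
    (ZMod.stdAddChar (k : ZMod n) : ℂ) = omega n ^ k := by
  have := ZMod.stdAddChar_coe (N := n) (k : ℤ)
  rw [Int.cast_natCast] at this
  rw [this, omega, ← Complex.exp_nat_mul]
  congr 1
  push_cast
  ring

lemma stdAddChar_mul_m {n m : ℕ} [NeZero n] (hnm : n = 2 * m) (k : ℕ) :
    (ZMod.stdAddChar ((k : ZMod n) * (m : ZMod n)) : ℂ) = (-1) ^ k := by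
  have hm : (m : ℂ) ≠ 0 := by
    have := NeZero.ne n
    exact_mod_cast (by omega : m ≠ 0)
  rw [← Nat.cast_mul, stdAddChar_natCast, mul_comm, pow_mul]
  congr 1
  rw [omega, ← Complex.exp_nat_mul, ← Complex.exp_pi_mul_I, hnm]
  congr 1
  push_cast
  field_simp

lemma rotSum_neg {n : ℕ} [NeZero n] {S : Finset (DihedralGroup n)} (hnormal : IsNormalCay n S)
    (h : ZMod n) : rotSum S (-h) = rotSum S h := by
  unfold rotSum
  rw [← Equiv.sum_comp (Equiv.neg (ZMod n))]
  simp [r_neg_mem hnormal]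

/-- The reflections in `S` are invariant under `b a^k ↦ b a^{k+2}`, which multiplies the character
sum by `ω^{2h}`. -/
lemma refSum_eq_zero {n : ℕ} [NeZero n] {S : Finset (DihedralGroup n)}
    (hnormal : IsNormalCay n S) (h : ZMod n) (h2 : 2 * h ≠ 0) : refSum S h = 0 := by
  have e : refSum S h = refSum S h * ZMod.stdAddChar (2 * h) := by
    conv_lhs => rw [refSum, ← Equiv.sum_comp (Equiv.addRight (2 : ZMod n))]
    rw [refSum, Finset.sum_mul]
    refine Finset.sum_congr rfl fun k _ => ?_
    simp [sr_add_two_mem hnormal, mul_add, AddChar.map_add_eq_mul, mul_comm h 2]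
  by_contra hne
  have h1 : (ZMod.stdAddChar (2 * h) : ℂ) = 1 := by
    apply mul_left_cancel₀ hne
    rw [← e, mul_one]
  rw [← (ZMod.stdAddChar (N := n)).map_zero_eq_one] at h1
  exact h2 (ZMod.injective_stdAddChar h1)

lemma mem_S1 {n : ℕ} (S : Finset (DihedralGroup n)) (k : ZMod n) : r k ∈ S1 n S ↔ r k ∈ S := by
  rw [S1, Finset.mem_filter]
  simp [isRot]

lemma sr_notMem_S1 {n : ℕ} (S : Finset (DihedralGroup n)) (k : ZMod n) : sr k ∉ S1 n S := by
  rw [S1, Finset.mem_filter]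
  simp [isRot]

lemma mem_S2 {n : ℕ} (S : Finset (DihedralGroup n)) (k : ZMod n) : r k ∈ S2 n S ↔ sr k ∈ S := by
  rw [S2, Finset.mem_filter, Finset.mem_image]
  simp only [isRot, and_true]
  constructor
  · rintro ⟨s, hs, h⟩
    rcases s with i | i
    · simp at h
    · simp at h
      rwa [← h]
  · intro h
    exact ⟨_, h, by simp⟩

lemma sr_notMem_S2 {n : ℕ} (S : Finset (DihedralGroup n)) (k : ZMod n) : sr k ∉ S2 n S := by
  rw [S2, Finset.mem_filter]
  simp [isRot]

lemma card_eq_sum {n : ℕ} [NeZero n] (C : Finset (DihedralGroup n)) :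
    (C.card : ℂ) = (∑ k : ZMod n, if r k ∈ C then 1 else 0) +
      ∑ k : ZMod n, if sr k ∈ C then 1 else 0 := by
  rw [← sum_dihedral (fun x => if x ∈ C then (1 : ℂ) else 0)]
  simp

lemma rotSum_zero {n : ℕ} [NeZero n] (S : Finset (DihedralGroup n)) :
    rotSum S 0 = (S1 n S).card := by
  rw [card_eq_sum]
  simp [rotSum, mem_S1, sr_notMem_S1]

lemma refSum_zero {n : ℕ} [NeZero n] (S : Finset (DihedralGroup n)) :
    refSum S 0 = (S2 n S).card := by
  rw [card_eq_sum]
  simp [refSum, mem_S2, sr_notMem_S2]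

lemma rotSum_add_refSum_zero {n : ℕ} [NeZero n] (S : Finset (DihedralGroup n)) :
    rotSum S 0 + refSum S 0 = S.card := by
  rw [card_eq_sum]
  simp [rotSum, refSum]

lemma rotSum_natCast {n : ℕ} [NeZero n] (S : Finset (DihedralGroup n)) (h : ℕ) :
    rotSum S (h : ZMod n) = eta n h (S1 n S) := by
  rw [rotSum, eta, ← sum_range_zmod]
  refine Finset.sum_congr rfl fun k _ => ?_
  rw [← Nat.cast_mul, stdAddChar_natCast]
  simp [mem_S1]

lemma dcnt_sub {n m : ℕ} [NeZero n] (hnm : n = 2 * m) (C : Finset (DihedralGroup n)) :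
    (dcnt n C 0 : ℂ) - dcnt n C 1 =
      ∑ k : ZMod n, if r k ∈ C then ZMod.stdAddChar ((m : ZMod n) * k) else 0 := by
  rw [← sum_range_zmod, dcnt, dcnt, Finset.card_filter, Finset.card_filter]
  push_cast
  rw [← Finset.sum_sub_distrib]
  refine Finset.sum_congr rfl fun k _ => ?_
  rw [mul_comm, stdAddChar_mul_m hnm]
  rcases Nat.mod_two_eq_zero_or_one k with h | h
  · simp [h, (Nat.even_iff.2 h).neg_one_pow]
  · by_cases hk : r (k : ZMod n) ∈ C <;> simp [h, (Nat.odd_iff.2 h).neg_one_pow, hk]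

lemma rotSum_m {n m : ℕ} [NeZero n] (hnm : n = 2 * m) (S : Finset (DihedralGroup n)) :
    rotSum S (m : ZMod n) = (dcnt n (S1 n S) 0 : ℂ) - dcnt n (S1 n S) 1 := by
  simp [dcnt_sub hnm, rotSum, mem_S1]

lemma refSum_m {n m : ℕ} [NeZero n] (hnm : n = 2 * m) (S : Finset (DihedralGroup n)) :
    refSum S (m : ZMod n) = (dcnt n (S2 n S) 0 : ℂ) - dcnt n (S2 n S) 1 := by
  simp [dcnt_sub hnm, refSum, mem_S2]

lemma natCast_two_mul_ne {n m : ℕ} (hnm : n = 2 * m) (h : ℕ) (h1 : 1 ≤ h) (h2 : h ≤ m - 1) :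
    (2 : ZMod n) * (h : ZMod n) ≠ 0 := by
  intro H
  have H' : ((2 * h : ℕ) : ZMod n) = 0 := by push_cast; exact H
  rw [ZMod.natCast_eq_zero_iff] at H'
  have := Nat.le_of_dvd (by omega) H'
  omega

/-! ### Vertex labels -/

lemma lab_eq_iff {n m : ℕ} [NeZero n] (hnm : n = 2 * m) (u v : ℕ) (hu : u < 2 * n)
    (hv : v < 2 * n) :
    lab n v = r (m : ZMod n) * lab n u ↔
      ((u < n ∧ v < n) ∨ (n ≤ u ∧ n ≤ v)) ∧
      ((u : ℤ) - (v : ℤ) = (m : ℤ) ∨ (u : ℤ) - (v : ℤ) = -(m : ℤ)) := by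
  have key : ∀ a b : ℕ, a < n → b < n → ((b : ZMod n) = m + a ↔
      ((a : ℤ) - (b : ℤ) = (m : ℤ) ∨ (a : ℤ) - (b : ℤ) = -(m : ℤ))) := by
    intro a b ha hb
    rw [← Nat.cast_add, ZMod.natCast_eq_natCast_iff', Nat.mod_eq_of_lt hb]
    by_cases hlt : m + a < n
    · rw [Nat.mod_eq_of_lt hlt]
      omega
    · rw [Nat.mod_eq_sub_mod (by omega), Nat.mod_eq_of_lt (by omega)]
      omega
  have hmm : -(m : ZMod n) = m := by linear_combination -(two_mul_m hnm)
  unfold lab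
  by_cases h1 : u < n <;> by_cases h2 : v < n
  · rw [if_pos h1, if_pos h2, r_mul_r, r.injEq, key u v h1 h2]
    omega
  · rw [if_pos h1, if_neg h2, r_mul_r]
    exact iff_of_false (by simp) (by omega)
  · rw [if_neg h1, if_pos h2, r_mul_sr]
    exact iff_of_false (by simp) (by omega)
  · rw [if_neg h1, if_neg h2, r_mul_sr, sr.injEq]
    rw [sub_eq_add_neg, hmm, add_comm, key (u - n) (v - n) (by omega) (by omega)]
    omega

lemma lab_injective {n : ℕ} [NeZero n] (u v : ℕ) (hu : u < 2 * n) (hv : v < 2 * n)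
    (h : lab n u = lab n v) : u = v := by
  have key : ∀ a b : ℕ, a < n → b < n → (a : ZMod n) = b → a = b := by
    intro a b ha hb h
    rwa [ZMod.natCast_eq_natCast_iff', Nat.mod_eq_of_lt ha, Nat.mod_eq_of_lt hb] at h
  unfold lab at h
  by_cases h1 : u < n <;> by_cases h2 : v < n <;> simp only [h1, h2, if_true, if_false] at h
  · exact key u v h1 h2 (r.inj h)
  · cases h
  · cases h
  · have := key (u - n) (v - n) (by omega) (by omega) (sr.inj h)
    omega

theorem stmt_10 (n m : ℕ) [NeZero n] (hnm : n = 2 * m) (hn4 : 4 ≤ n)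
    (S : Finset (DihedralGroup n)) (hS1 : (1 : DihedralGroup n) ∉ S)
    (hSinv : ∀ s ∈ S, s⁻¹ ∈ S) (hSne : S.Nonempty)
    (hnormal : IsNormalCay n S)
    (u v : ℕ) (hu : u < 2 * n) (hv : v < 2 * n) (huv : u ≠ v)
    (τ : ℕ) (hτ : 1 ≤ τ) :
    PST n S τ (lab n u) (lab n v) ↔
      ((u < n ∧ v < n) ∨ (n ≤ u ∧ n ≤ v)) ∧
      ((u : ℤ) - (v : ℤ) = (m : ℤ) ∨ (u : ℤ) - (v : ℤ) = -(m : ℤ)) ∧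
      (Teval τ 1 = 1 ∧ Teval τ ((((S1 n S).card : ℂ) - ((S2 n S).card : ℂ)) / (S.card : ℂ)) = 1 ∧
        Teval τ (((dcnt n (S1 n S) 0 : ℂ) - (dcnt n (S1 n S) 1 : ℂ) + (dcnt n (S2 n S) 0 : ℂ) - (dcnt n (S2 n S) 1 : ℂ)) / (S.card : ℂ)) = (-1 : ℂ) ^ m ∧
        Teval τ (((dcnt n (S1 n S) 0 : ℂ) - (dcnt n (S1 n S) 1 : ℂ) + (dcnt n (S2 n S) 1 : ℂ) - (dcnt n (S2 n S) 0 : ℂ)) / (S.card : ℂ)) = (-1 : ℂ) ^ m) ∧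
      (∀ h : ℕ, 1 ≤ h → h ≤ m - 1 →
        Teval τ (eta n h (S1 n S) / (S.card : ℂ)) = (-1 : ℂ) ^ h) := by
  have hd : (S.card : ℂ) ≠ 0 := by exact_mod_cast hSne.card_pos.ne'
  have hT1 : Teval τ 1 = 1 := Chebyshev.T_eval_one _ _
  have hpst : PST n S τ (lab n u) (lab n v) ↔ lab n v = r (m : ZMod n) * lab n u ∧
      ∀ w, PST n S τ w (r (m : ZMod n) * w) :=
    ⟨fun H => H.center hnm hn4 hnormal fun h => huv (lab_injective u v hu hv h),
      fun ⟨h, H⟩ => h ▸ H _⟩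
  rw [hpst, lab_eq_iff hnm u v hu hv, forall_PST_iff hnm hnormal, and_assoc]
  refine and_congr_right fun _ => and_congr_right fun _ => ?_
  constructor
  · intro H
    refine ⟨⟨hT1, ?_, ?_, ?_⟩, fun h h1 h2 => ?_⟩
    · simpa [rotSum_zero, refSum_zero] using (H 0).2
    · have := (H m).1
      rw [stdAddChar_mul_m hnm, rotSum_m hnm, refSum_m hnm] at this
      rw [← this]
      congr 2
      ring
    · have := (H m).2
      rw [stdAddChar_mul_m hnm, rotSum_m hnm, refSum_m hnm] at this
      rw [← this]
      congr 2
      ring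
    · have := (H h).1
      rwa [refSum_eq_zero hnormal _ (natCast_two_mul_ne hnm h h1 h2), add_zero, rotSum_natCast,
        stdAddChar_mul_m hnm] at this
  · rintro ⟨⟨-, c2, c3, c4⟩, c5⟩
    have hsmall : ∀ h : ℕ, 1 ≤ h → h ≤ m - 1 →
        Teval τ (rotSum S (h : ZMod n) / (S.card : ℂ)) =
          ZMod.stdAddChar ((h : ZMod n) * (m : ZMod n)) := fun h h1 h2 => by
      rw [rotSum_natCast, stdAddChar_mul_m hnm, c5 h h1 h2]
    intro h
    have hlt := ZMod.val_lt h
    have hcast := ZMod.natCast_zmod_val h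
    rcases Nat.eq_zero_or_pos h.val with h0 | hpos
    · have h0' : h = 0 := by simpa using h0
      subst h0'
      rw [rotSum_add_refSum_zero, div_self hd, hT1, rotSum_zero, refSum_zero, c2]
      simp
    by_cases hm : h.val = m
    · rw [hm] at hcast
      rw [← hcast, stdAddChar_mul_m hnm, rotSum_m hnm, refSum_m hnm, ← c3]
      refine ⟨by congr 2; ring, ?_⟩
      rw [c3, ← c4]
      congr 2
      ring
    have h2 : 2 * h ≠ 0 := fun h2 => by
      rcases zmod_two_mul_eq_zero hnm h h2 with e | e
      · simp [e] at hpos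
      · exact hm (by rw [e]; exact ZMod.val_cast_of_lt (by omega))
    rw [refSum_eq_zero hnormal h h2, add_zero, sub_zero, and_self]
    by_cases hle : h.val ≤ m - 1
    · rw [← hcast]
      exact hsmall _ hpos hle
    · -- For `h > m`, pass to `-h`, which is represented by `n - h ∈ [1, m - 1]`.
      have e : ((n - h.val : ℕ) : ZMod n) = -h := by
        rw [Nat.cast_sub hlt.le, hcast]
        simp
      have := hsmall (n - h.val) (by omega) (by omega)
      rw [e, rotSum_neg hnormal] at this
      rw [this]
      congr 1
      linear_combination -h * two_mul_m hnm

end PaperPST
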